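/- Every maximal Sidon set in F_2^7 has cardinality 12, and every maximal Sidon set in F_2^8 has cardinality 15, 16 or 18. -/

import Mathlib

/-- A subset `M` of `𝔽₂ᵗ` is Sidon if `m₁+m₂ ≠ m₃+m₄` for pairwise distinct elements. -/
def IsSidon {t : ℕ} (M : Finset (Fin t → ZMod 2)) : Prop :=
  ∀ m₁ ∈ M, ∀ m₂ ∈ M, ∀ m₃ ∈ M, ∀ m₄ ∈ M,
    (m₁ ≠ m₂ ∧ m₁ ≠ m₃ ∧ m₁ ≠ m₄ ∧ m₂ ≠ m₃ ∧ m₂ ≠ m₄ ∧ m₃ ≠ m₄) →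
    m₁ + m₂ ≠ m₃ + m₄

/-- `M` is sum-free if `m₁+m₂ ≠ m₃` for all `m₁,m₂,m₃ ∈ M`. -/
def IsSumFree {t : ℕ} (M : Finset (Fin t → ZMod 2)) : Prop :=
  ∀ m₁ ∈ M, ∀ m₂ ∈ M, ∀ m₃ ∈ M, m₁ + m₂ ≠ m₃

/-- A maximal Sidon set. -/
def IsMaximalSidon {t : ℕ} (M : Finset (Fin t → ZMod 2)) : Prop :=
  IsSidon M ∧ ∀ S : Finset (Fin t → ZMod 2), IsSidon S → M ⊆ S → S = M

/-- Maximum size of a Sidon set in `𝔽₂ᵗ`. -/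
noncomputable def sMax (t : ℕ) : ℕ :=
  sSup {n : ℕ | ∃ M : Finset (Fin t → ZMod 2), IsSidon M ∧ M.card = n}

/-- 2-sums of `M`. -/
def twoSums {t : ℕ} (M : Finset (Fin t → ZMod 2)) : Finset (Fin t → ZMod 2) :=
  (M ×ˢ M).image fun p => p.1 + p.2

/-- 2-star-sums of `M` (sums of two distinct elements). -/
def twoStarSums {t : ℕ} (M : Finset (Fin t → ZMod 2)) : Finset (Fin t → ZMod 2) :=
  ((M ×ˢ M).filter fun p => p.1 ≠ p.2).image fun p => p.1 + p.2

/-- 3-sums of `M`. -/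
def threeSums {t : ℕ} (M : Finset (Fin t → ZMod 2)) : Finset (Fin t → ZMod 2) :=
  ((M ×ˢ M) ×ˢ M).image fun p => p.1.1 + p.1.2 + p.2

/-- 3-star-sums of `M` (sums of three pairwise distinct elements). -/
def threeStarSums {t : ℕ} (M : Finset (Fin t → ZMod 2)) : Finset (Fin t → ZMod 2) :=
  (((M ×ˢ M) ×ˢ M).filter fun p => p.1.1 ≠ p.1.2 ∧ p.1.1 ≠ p.2 ∧ p.1.2 ≠ p.2).image
    fun p => p.1.1 + p.1.2 + p.2

/-- 4-sums of `M`. -/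
def fourSums {t : ℕ} (M : Finset (Fin t → ZMod 2)) : Finset (Fin t → ZMod 2) :=
  (((M ×ˢ M) ×ˢ M) ×ˢ M).image fun p => p.1.1.1 + p.1.1.2 + p.1.2 + p.2

/-!
The sums of three elements of a maximal Sidon set fill the space, so the set spans it affinely, and
an affine change of coordinates turns it into one that contains the standard frame. With vectors
coded as numbers, whose addition is bitwise XOR, all maximal Sidon sets containing the frame are
found by backtracking over the points that no sum of three chosen points covers. The search is kept
small by affine transvections that preserve the chosen points and the candidates: once all the sets
containing a candidate have been treated, the whole orbit of the candidate can be rejected.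
-/

theorem IsSidon.eq_of_add_add_mem {t : ℕ} {M : Finset (Fin t → ZMod 2)} (hM : IsSidon M) :
    ∀ a ∈ M, ∀ b ∈ M, ∀ c ∈ M, a + b + c ∈ M → a = b ∨ a = c ∨ b = c := by
  intro a ha b hb c hc h_mem
  by_contra! ⟨hab, hac, hbc⟩
  have h := hM a ha b hb c hc _ h_mem
  have := ZModModule.add_self c
  have := ZModModule.add_self a
  have := ZModModule.add_self b
  grind

namespace IsMaximalSidon

variable {t : ℕ} {M : Finset (Fin t → ZMod 2)}

theorem exists_add_add_eq (hM : IsMaximalSidon M) (v : Fin t → ZMod 2) :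
    ∃ a ∈ M, ∃ b ∈ M, ∃ c ∈ M, a + b + c = v := by
  by_cases hv : v ∈ M
  · exact ⟨v, hv, v, hv, v, hv, by rw [ZModModule.add_self, zero_add]⟩
  have h_not_sidon : ¬ IsSidon (insert v M) := fun h =>
    hv (hM.2 _ h (Finset.subset_insert v M) ▸ Finset.mem_insert_self v M)
  simp only [IsSidon, Finset.mem_insert] at h_not_sidon
  push Not at h_not_sidon
  obtain ⟨m₁, h₁, m₂, h₂, m₃, h₃, m₄, h₄, h_ne, h_sum⟩ := h_not_sidon
  have eq_of_eq {a b c d : Fin t → ZMod 2} (h : a + b = c + d) : b + c + d = a := by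
    rw [add_assoc, ← h, add_comm a, ← add_assoc, ZModModule.add_self, zero_add]
  have eq₁ : m₂ + m₃ + m₄ = m₁ := eq_of_eq h_sum
  have eq₂ : m₁ + m₃ + m₄ = m₂ := eq_of_eq (by rw [add_comm, h_sum])
  have eq₃ : m₄ + m₁ + m₂ = m₃ := eq_of_eq h_sum.symm
  have eq₄ : m₃ + m₁ + m₂ = m₄ := eq_of_eq (by rw [add_comm, h_sum])
  clear eq_of_eq
  have h_sidon := hM.1 m₁
  grind

theorem exists_basis_mem (hM : IsMaximalSidon M) :
    ∃ m₀ ∈ M, ∃ b : Module.Basis (Fin t) (ZMod 2) (Fin t → ZMod 2), ∀ i, b i + m₀ ∈ M := by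
  obtain ⟨m₀, hm₀, -⟩ := hM.exists_add_add_eq 0
  have h_span : ⊤ ≤ Submodule.span (ZMod 2) {v | v + m₀ ∈ M} := by
    intro v _
    obtain ⟨a, ha, b, hb, c, hc, habc⟩ := hM.exists_add_add_eq (v + m₀)
    have mem_span {a} (ha : a ∈ M) : a + m₀ ∈ Submodule.span (ZMod 2) {v | v + m₀ ∈ M} :=
      Submodule.subset_span (by
        rwa [Set.mem_ofPred_eq, add_assoc, ZModModule.add_self, add_zero])
    have h_sum : v = (a + m₀) + (b + m₀) + (c + m₀) := by
      have := ZModModule.add_self m₀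
      grind
    rw [h_sum]
    exact add_mem (add_mem (mem_span ha) (mem_span hb)) (mem_span hc)
  let b := Module.Basis.ofSpan h_span
  have h_card := Module.finrank_eq_nat_card_basis b
  rw [Module.finrank_fin_fun] at h_card
  have := Module.Finite.finite_basis b
  refine ⟨m₀, hm₀, b.reindex (Finite.equivFinOfCardEq h_card.symm), fun i => ?_⟩
  exact Module.Basis.ofSpan_subset h_span ⟨_, (b.reindex_apply _ i).symm⟩

end IsMaximalSidon

/-- The coding of `𝔽₂ᵗ` by the numbers below `2ᵗ`, coordinates becoming binary digits, so that
addition becomes bitwise XOR. -/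
def code {t : ℕ} (v : Fin t → ZMod 2) : ℕ :=
  Nat.ofBits fun i => v i == 1

section Code

variable {t : ℕ}

theorem code_lt_two_pow (v : Fin t → ZMod 2) : code v < 2 ^ t :=
  Nat.ofBits_lt_two_pow _

theorem code_add (v w : Fin t → ZMod 2) : code (v + w) = code v ^^^ code w := by
  have beq_add : ∀ a b : ZMod 2, (a + b == 1) = ((a == 1) ^^ (b == 1)) := by decide
  refine Nat.eq_of_testBit_eq fun i => ?_
  by_cases hi : i < t <;> simp [code, Nat.testBit_ofBits, hi, beq_add]

theorem code_zero : code (0 : Fin t → ZMod 2) = 0 :=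
  Nat.eq_of_testBit_eq fun i => by simp [code, Nat.testBit_ofBits]

theorem code_single (i : Fin t) : code (Pi.single i 1) = 2 ^ (i : ℕ) := by
  refine Nat.eq_of_testBit_eq fun j => ?_
  rw [code, Nat.testBit_ofBits, Nat.testBit_two_pow]
  simp only [Pi.single_apply]
  grind

theorem code_injective : Function.Injective (code : (Fin t → ZMod 2) → ℕ) := by
  have beq_inj : ∀ a b : ZMod 2, (a == 1) = (b == 1) → a = b := by decide
  intro v w h
  funext i
  have := congrArg (Nat.testBit · i) h
  simp only [code, Nat.testBit_ofBits_lt _ _ i.2] at this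
  exact beq_inj _ _ this

theorem exists_code_eq {x : ℕ} (hx : x < 2 ^ t) : ∃ v : Fin t → ZMod 2, code v = x := by
  refine ⟨fun i => if x.testBit i then 1 else 0, ?_⟩
  have ite_beq : ∀ b : Bool, ((if b then 1 else 0 : ZMod 2) == 1) = b := by decide
  simp only [code, ite_beq, Nat.ofBits_testBit, Nat.mod_eq_of_lt hx]

end Code

/-- A finite set of numbers below `2ᵗ` that codes a maximal Sidon set of `𝔽₂ᵗ` when addition is
bitwise XOR: no nontrivial sum of three elements returns to the set, and the sums of three elements
fill the whole space. -/
structure IsMaximalSidonCode (t : ℕ) (S : Finset ℕ) : Prop where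
  lt_two_pow : ∀ x ∈ S, x < 2 ^ t
  sidon : ∀ a ∈ S, ∀ b ∈ S, ∀ c ∈ S, a ^^^ b ^^^ c ∈ S → a = b ∨ a = c ∨ b = c
  exists_xor_xor_eq : ∀ z < 2 ^ t, ∃ a ∈ S, ∃ b ∈ S, ∃ c ∈ S, a ^^^ b ^^^ c = z

/-- The points `0, 2⁰, …, 2ᵗ⁻¹`, coding the standard affine frame of `𝔽₂ᵗ`. -/
def frame (t : ℕ) : List ℕ :=
  0 :: (List.range t).map (2 ^ ·)

theorem nodup_frame (t : ℕ) : (frame t).Nodup := by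
  simp [frame, List.nodup_range.map (Nat.pow_right_injective le_rfl)]

theorem IsMaximalSidon.exists_isMaximalSidonCode {t : ℕ} {M : Finset (Fin t → ZMod 2)}
    (hM : IsMaximalSidon M) :
    ∃ S : Finset ℕ, IsMaximalSidonCode t S ∧ S.card = M.card ∧ ∀ a ∈ frame t, a ∈ S := by
  obtain ⟨m₀, hm₀, b, hb⟩ := hM.exists_basis_mem
  let f v := code (b.equivFun (v + m₀))
  have f_injective : Function.Injective f :=
    code_injective.comp (b.equivFun.injective.comp (add_left_injective m₀))
  have f_add (u v w) : f (u + v + w) = f u ^^^ f v ^^^ f w := by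
    simp only [f, ← code_add, ← map_add]
    congr 2
    have := ZModModule.add_self m₀
    grind
  have f_surjOn {z} (hz : z < 2 ^ t) : ∃ v, f v = z := by
    obtain ⟨v, rfl⟩ := exists_code_eq hz
    refine ⟨b.equivFun.symm v + m₀, ?_⟩
    simp only [f, add_assoc, ZModModule.add_self, add_zero, LinearEquiv.apply_symm_apply]
  have f_m₀ : f m₀ = 0 := by simp only [f, ZModModule.add_self, map_zero, code_zero]
  have f_basis (i) : f (b i + m₀) = 2 ^ (i : ℕ) := by
    rw [← code_single]
    simp only [f, add_assoc, ZModModule.add_self, add_zero]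
    congr 1
    funext j
    rw [Module.Basis.equivFun_self, Pi.single_apply]
    grind
  refine ⟨M.image f, ⟨?_, ?_, ?_⟩, Finset.card_image_of_injective M f_injective, ?_⟩
  · exact Finset.forall_mem_image.2 fun v _ => code_lt_two_pow _
  · simp only [Finset.forall_mem_image, ← f_add, f_injective.eq_iff, f_injective.mem_finset_image]
    exact hM.1.eq_of_add_add_mem
  · intro z hz
    obtain ⟨v, rfl⟩ := f_surjOn hz
    obtain ⟨u₁, h₁, u₂, h₂, u₃, h₃, rfl⟩ := hM.exists_add_add_eq v
    exact ⟨f u₁, Finset.mem_image_of_mem f h₁, f u₂, Finset.mem_image_of_mem f h₂,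
      f u₃, Finset.mem_image_of_mem f h₃, (f_add u₁ u₂ u₃).symm⟩
  · simp only [frame, List.mem_cons, List.mem_map, List.mem_range, Finset.mem_image]
    rintro a (rfl | ⟨i, hi, rfl⟩)
    · exact ⟨m₀, hm₀, f_m₀⟩
    · exact ⟨b ⟨i, hi⟩ + m₀, hb _, f_basis ⟨i, hi⟩⟩

section BitMask

/-- The mask `m` with its `k`-th bit set. -/
def insertBit (m k : ℕ) : ℕ :=
  m ||| 1 <<< k

theorem testBit_insertBit (m k j : ℕ) :
    (insertBit m k).testBit j = true ↔ m.testBit j = true ∨ j = k := by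
  rw [insertBit, Nat.one_shiftLeft, Nat.testBit_or, Bool.or_eq_true, Nat.testBit_two_pow,
    decide_eq_true_iff, eq_comm (a := k)]

theorem testBit_foldl_insertBit {α : Type*} (f : α → ℕ) (L : List α) (m k : ℕ) :
    (L.foldl (fun m a => insertBit m (f a)) m).testBit k = true ↔
      m.testBit k = true ∨ ∃ a ∈ L, k = f a := by
  induction L generalizing m with
  | nil => simp
  | cons a L ih => simp [ih, testBit_insertBit, or_assoc]

/-- The characteristic bit mask of a list, which makes a membership test a single bit test. -/
def bitMask (L : List ℕ) : ℕ :=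
  L.foldl insertBit 0

theorem testBit_bitMask (L : List ℕ) (k : ℕ) : (bitMask L).testBit k = true ↔ k ∈ L := by
  rw [bitMask, testBit_foldl_insertBit fun a => a]
  simp

/-- The bit mask of the XORs of two elements of a list. The bit `0` is set even for the empty list,
so that `compatible` always rejects the new point itself. -/
def pairSums : List ℕ → ℕ
  | [] => 1
  | x :: L => L.foldl (fun m a => insertBit m (x ^^^ a)) (pairSums L)

theorem testBit_pairSums (L : List ℕ) (k : ℕ) :
    (pairSums L).testBit k = true ↔ k = 0 ∨ ∃ a ∈ L, ∃ b ∈ L, k = a ^^^ b := by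
  induction L with
  | nil => simp [pairSums, Nat.testBit_one_eq_true_iff_self_eq_zero]
  | cons x L ih =>
    rw [pairSums, testBit_foldl_insertBit, ih]
    have := Nat.xor_comm x
    have := Nat.xor_self x
    grind

end BitMask

/-- `z` may be added to a code `L` without destroying the Sidon property: it is not the sum of
three elements of `L`. -/
def Uncovered (L : List ℕ) (z : ℕ) : Prop :=
  ∀ a ∈ L, ∀ b ∈ L, ∀ c ∈ L, a ^^^ b ^^^ c ≠ z

/-- The elements of `C` that remain uncovered by the code `L` after it is extended by `x`. -/
def compatible (L : List ℕ) (x : ℕ) (C : List ℕ) : List ℕ :=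
  C.filter fun y => !(pairSums L).testBit (x ^^^ y)

section Uncovered

variable {L C : List ℕ} {x z : ℕ}

theorem xor_xor_eq_iff {a b c d : ℕ} : a ^^^ b ^^^ c = d ↔ a ^^^ d = b ^^^ c := by
  rw [Nat.xor_assoc]
  constructor
  · rintro rfl
    simp
  · intro h
    simp [← h]

theorem Uncovered.notMem (hz : Uncovered L z) : z ∉ L := fun h => hz z h z h z h (by simp)

theorem Uncovered.cons_iff (hz : Uncovered L z) :
    Uncovered (x :: L) z ↔ x ≠ z ∧ ∀ a ∈ L, ∀ b ∈ L, x ^^^ z ≠ a ^^^ b := by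
  have h_notMem := hz.notMem
  constructor
  · intro h
    exact ⟨fun hxz => h.notMem (hxz ▸ List.mem_cons_self), fun a ha b hb hab =>
      h x List.mem_cons_self a (List.mem_cons_of_mem x ha) b (List.mem_cons_of_mem x hb)
        (xor_xor_eq_iff.2 hab)⟩
  rintro ⟨h_ne, h_pair⟩ a ha b hb c hc habc
  have h_pair_ne {p q : ℕ} (hp : p ∈ L) (hq : q ∈ L) : x ^^^ p ^^^ q ≠ z :=
    mt xor_xor_eq_iff.1 (h_pair p hp q hq)
  rw [List.mem_cons] at ha hb hc
  rcases ha with rfl | ha <;> rcases hb with rfl | hb <;> rcases hc with rfl | hc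
  · simp_all
  · simp_all
  · simp_all
  · exact h_pair_ne hb hc habc
  · simp_all
  · exact h_pair_ne ha hc (by grind)
  · exact h_pair_ne ha hb (by grind)
  · exact hz a ha b hb c hc habc

theorem Uncovered.mem_compatible_iff (hz : Uncovered L z) :
    z ∈ compatible L x C ↔ z ∈ C ∧ Uncovered (x :: L) z := by
  simp [hz.cons_iff, compatible, ← Bool.not_eq_true, testBit_pairSums]

theorem IsMaximalSidonCode.uncovered {t : ℕ} {S : Finset ℕ} (hS : IsMaximalSidonCode t S)
    (hLS : ∀ a ∈ L, a ∈ S) (hzS : z ∈ S) (hzL : z ∉ L) : Uncovered L z := by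
  rintro a ha b hb c hc rfl
  rcases hS.sidon a (hLS a ha) b (hLS b hb) c (hLS c hc) hzS with rfl | rfl | rfl <;> grind

end Uncovered

/-- Every maximal Sidon code that lies between `L` and `L ∪ A` has an allowed cardinality. -/
def ExtensionsOk (t : ℕ) (ok : ℕ → Bool) (L A : List ℕ) : Prop :=
  ∀ S, IsMaximalSidonCode t S → (∀ a ∈ L, a ∈ S) → (∀ z ∈ S, z ∈ L ∨ z ∈ A) → ok S.card = true

/-- The map `x ↦ x + φ(x) • shift` on codes, where the affine form `φ` is the sum of `const` and of
the binary digits of `x` at the positions in `bits`. It is an involution of the affine space when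
the linear part of `φ` vanishes at `shift`. -/
structure AffineTransvection where
  shift : ℕ
  const : Bool
  bits : List ℕ

namespace AffineTransvection

/-- The affine form `φ` of a transvection. -/
def moves (σ : AffineTransvection) (x : ℕ) : Bool :=
  σ.bits.foldr (fun i b => x.testBit i ^^ b) σ.const

/-- The action of a transvection on codes. -/
def apply (σ : AffineTransvection) (x : ℕ) : ℕ :=
  bif σ.moves x then x ^^^ σ.shift else x

/-- The transvection is an involution of the space of codes below `2ᵗ` that preserves the lists `L`
and `A`. -/
def isSymmetry (t : ℕ) (L A : List ℕ) (σ : AffineTransvection) : Bool :=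
  σ.moves σ.shift == σ.const && decide (σ.shift < 2 ^ t) &&
    (L.all fun a => (bitMask L).testBit (σ.apply a)) &&
    (A.all fun a => (bitMask A).testBit (σ.apply a))

variable {t : ℕ} {ok : ℕ → Bool} {L A : List ℕ} {σ : AffineTransvection} {S : Finset ℕ}

theorem isSymmetry_iff :
    σ.isSymmetry t L A = true ↔
      σ.moves σ.shift = σ.const ∧ σ.shift < 2 ^ t ∧
        (∀ a ∈ L, σ.apply a ∈ L) ∧ ∀ a ∈ A, σ.apply a ∈ A := by
  simp [isSymmetry, testBit_bitMask, and_assoc]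

theorem moves_xor_xor (σ : AffineTransvection) (x y z : ℕ) :
    σ.moves (x ^^^ y ^^^ z) = (σ.moves x ^^ σ.moves y ^^ σ.moves z) := by
  unfold moves
  induction σ.bits with
  | nil => simp
  | cons i I ih =>
    rw [List.foldr_cons, ih, Nat.testBit_xor, Nat.testBit_xor]
    simp only [List.foldr_cons, Bool.xor_assoc, Bool.xor_left_comm]

theorem apply_xor_xor (σ : AffineTransvection) (x y z : ℕ) :
    σ.apply (x ^^^ y ^^^ z) = σ.apply x ^^^ σ.apply y ^^^ σ.apply z := by
  simp only [apply, moves_xor_xor]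
  cases σ.moves x <;> cases σ.moves y <;> cases σ.moves z <;> simp only [cond_true, cond_false] <;>
    grind

theorem moves_zero (σ : AffineTransvection) : σ.moves 0 = σ.const := by
  simp [moves]

theorem apply_involutive (hσ : σ.moves σ.shift = σ.const) : Function.Involutive σ.apply := by
  intro x
  have moves_shift : σ.moves (x ^^^ σ.shift) = σ.moves x := by
    have := σ.moves_xor_xor x σ.shift 0
    rw [Nat.xor_zero, hσ, moves_zero] at this
    simpa using this
  cases hx : σ.moves x <;> simp [apply, hx, moves_shift]

theorem apply_lt_two_pow (hσ : σ.shift < 2 ^ t) {x : ℕ} (hx : x < 2 ^ t) : σ.apply x < 2 ^ t := by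
  unfold apply
  cases σ.moves x
  · exact hx
  · exact Nat.xor_lt_two_pow hx hσ

theorem isMaximalSidonCode_image (hS : IsMaximalSidonCode t S) (hσ : σ.moves σ.shift = σ.const)
    (hσt : σ.shift < 2 ^ t) : IsMaximalSidonCode t (S.image σ.apply) where
  lt_two_pow := Finset.forall_mem_image.2 fun x hx => apply_lt_two_pow hσt (hS.lt_two_pow x hx)
  sidon := by
    have h_inj := (apply_involutive hσ).injective
    simp only [Finset.forall_mem_image, ← apply_xor_xor, h_inj.eq_iff, h_inj.mem_finset_image]
    exact hS.sidon
  exists_xor_xor_eq := by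
    intro z hz
    obtain ⟨a, ha, b, hb, c, hc, habc⟩ := hS.exists_xor_xor_eq _ (apply_lt_two_pow hσt hz)
    refine ⟨_, Finset.mem_image_of_mem _ ha, _, Finset.mem_image_of_mem _ hb,
      _, Finset.mem_image_of_mem _ hc, ?_⟩
    rw [← apply_xor_xor, habc, apply_involutive hσ z]

theorem extensionsOk_apply (hσ : σ.isSymmetry t L A = true) {y : ℕ}
    (hy : ExtensionsOk t ok (y :: L) A) : ExtensionsOk t ok (σ.apply y :: L) A := by
  obtain ⟨hσ, hσt, hL, hA⟩ := isSymmetry_iff.1 hσ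
  have h_inv := apply_involutive hσ
  intro S hS hLS hSA
  rw [← Finset.card_image_of_injective S h_inv.injective]
  refine hy _ (isMaximalSidonCode_image hS hσ hσt) ?_ ?_
  · intro a ha
    refine Finset.mem_image.2 ⟨σ.apply a, ?_, h_inv a⟩
    grind
  · simp only [Finset.forall_mem_image]
    intro z hz
    have := h_inv y
    grind

/-- A graph search that adds to the bit mask `O` the points reachable from the queue along the maps
in `Γ`. If the fuel runs out, points are missing, which makes the search below slower but not
wrong. -/
def orbit (Γ : List AffineTransvection) : (fuel O : ℕ) → (queue : List ℕ) → ℕ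
  | n + 1, O, y :: Q =>
    bif O.testBit y then orbit Γ n O Q else orbit Γ n (insertBit O y) (Γ.map (·.apply y) ++ Q)
  | _, O, _ => O

variable {Γ : List AffineTransvection}

theorem orbit_induction {P : ℕ → Prop} (hΓ : ∀ σ ∈ Γ, ∀ y, P y → P (σ.apply y)) (n : ℕ) {O : ℕ}
    {Q : List ℕ} (hO : ∀ y, O.testBit y = true → P y) (hQ : ∀ y ∈ Q, P y) :
    ∀ y, (orbit Γ n O Q).testBit y = true → P y := by
  induction n generalizing O Q with
  | zero => simpa [orbit] using hO
  | succ n ih =>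
    cases Q with
    | nil => simpa [orbit] using hO
    | cons y Q =>
      rw [List.forall_mem_cons] at hQ
      cases hy : O.testBit y <;> simp only [orbit, hy, cond_true, cond_false]
      · refine ih (fun z hz => ?_) fun z hz => ?_
        · rcases (testBit_insertBit O y z).1 hz with hz | rfl
          exacts [hO z hz, hQ.1]
        · rcases List.mem_append.1 hz with hz | hz
          · obtain ⟨σ, hσ, rfl⟩ := List.mem_map.1 hz
            exact hΓ σ hσ y hQ.1
          · exact hQ.2 z hz
      · exact ih hO hQ.2

/-- The elements of `C` in the orbit of `x` under `Γ`, and the other elements of `C`. For empty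
`Γ` the orbit is taken to be empty, which saves a pass when `x` is not in `C`. -/
def splitOrbit (fuel : ℕ) (Γ : List AffineTransvection) (x : ℕ) (C : List ℕ) : List ℕ × List ℕ :=
  bif Γ.isEmpty then ([], C) else C.partition (orbit Γ fuel 0 [x]).testBit

theorem mem_splitOrbit {fuel x y : ℕ} {C : List ℕ} :
    y ∈ C ↔ y ∈ (splitOrbit fuel Γ x C).1 ∨ y ∈ (splitOrbit fuel Γ x C).2 := by
  cases h : Γ.isEmpty
  · simp only [splitOrbit, h, cond_false, List.partition_eq_filter_filter, List.mem_filter]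
    grind
  · simp [splitOrbit, h]

theorem splitOrbit_induction {P : ℕ → Prop} (hΓ : ∀ σ ∈ Γ, ∀ y, P y → P (σ.apply y)) {fuel x : ℕ}
    (hx : P x) {C : List ℕ} : ∀ y ∈ (splitOrbit fuel Γ x C).1, P y := by
  intro y hy
  refine orbit_induction hΓ fuel (O := 0) (Q := [x]) (by simp) (by simpa using hx) y ?_
  cases h : Γ.isEmpty <;> simp_all [splitOrbit]

/-- The transvection along `p ^^^ q` whose affine form is `1` at those points of `frame t` that are
equal to `p` or `q` and `0` at its other points. It exchanges two points `p` and `q` of the frame;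
for other pairs it is only a guess, to be tested with `isSymmetry`. -/
def swap (t p q : ℕ) : AffineTransvection where
  shift := p ^^^ q
  const := p == 0 || q == 0
  bits := (List.range t).filter fun i => (2 ^ i == p || 2 ^ i == q) != (p == 0 || q == 0)

/-- The members of `Γ` that preserve `L` and `A`, unless `A` is so short that testing for
symmetries would cost more than it saves. -/
def symmetries (t : ℕ) (Γ : List AffineTransvection) (L A : List ℕ) : List AffineTransvection :=
  bif A.length.blt 16 then [] else Γ.filter (·.isSymmetry t L A)

theorem isSymmetry_of_mem_symmetries :
    ∀ σ ∈ symmetries t Γ L A, σ.isSymmetry t L A = true := by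
  unfold symmetries
  cases A.length.blt 16 <;> simp

end AffineTransvection

section Search

open AffineTransvection

/-- Backtracking over the maximal Sidon codes between `L` and `L ∪ C`. The points of `E` are not
covered by `L` and have been rejected as members, so that `L` can only be such a code if `E` is
empty. The maps in `Γ` are symmetries of `L` and of the candidates with which `L` was first
considered: after all codes containing the candidate `x` have been treated, its orbit is moved from
`C` to `E`. -/
def sidonSearch (t : ℕ) (ok : ℕ → Bool) :
    (fuel : ℕ) → (Γ : List AffineTransvection) → (L E C : List ℕ) → Bool
  | _, _, L, E, [] => !E.isEmpty || ok L.length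
  | 0, _, _, _, _ :: _ => false
  | n + 1, Γ, L, E, x :: C =>
    sidonSearch t ok n (symmetries t (L.map (swap t x) ++ Γ) (x :: L) (compatible L x C)) (x :: L)
      (compatible L x E) (compatible L x C) &&
    sidonSearch t ok n Γ L (x :: ((splitOrbit (4 ^ t) Γ x C).1 ++ E)) (splitOrbit (4 ^ t) Γ x C).2

variable {t : ℕ} {ok : ℕ → Bool} {L A C : List ℕ} {x : ℕ}

theorem extensionsOk_of_not_isEmpty_or {E : List ℕ} (hL : L.Nodup)
    (hE : ∀ z ∈ E, z < 2 ^ t ∧ Uncovered L z) (hA : ∀ y ∈ A, ExtensionsOk t ok (y :: L) A)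
    (h : (!E.isEmpty || ok L.length) = true) : ExtensionsOk t ok L A := by
  intro S hS hLS hSA
  by_cases hy : ∃ y ∈ S, y ∈ A
  · obtain ⟨y, hyS, hyA⟩ := hy
    exact hA y hyA S hS (List.forall_mem_cons.2 ⟨hyS, hLS⟩) (by grind)
  have mem_iff (z) : z ∈ S ↔ z ∈ L := by grind
  obtain rfl : S = L.toFinset := by ext z; simp [mem_iff]
  cases E with
  | nil => simpa [List.toFinset_card_of_nodup hL] using h
  | cons z E =>
    obtain ⟨hzt, hz⟩ := hE z List.mem_cons_self
    obtain ⟨a, ha, b, hb, c, hc, habc⟩ := hS.exists_xor_xor_eq z hzt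
    rw [List.mem_toFinset] at ha hb hc
    exact absurd habc (hz a ha b hb c hc)

theorem extensionsOk_cons (hCA : ∀ y ∈ x :: C, y ∈ A)
    (hA : ∀ y ∈ A, y ∉ x :: C → ExtensionsOk t ok (y :: L) A)
    (h : ExtensionsOk t ok (x :: L) (compatible L x C)) :
    ExtensionsOk t ok (x :: L) A := by
  intro S hS hxL hSA
  obtain ⟨-, hLS⟩ := List.forall_mem_cons.1 hxL
  by_cases hy : ∃ y ∈ S, y ∈ A ∧ y ∉ x :: C
  · obtain ⟨y, hyS, hyA, hyC⟩ := hy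
    exact hA y hyA hyC S hS (List.forall_mem_cons.2 ⟨hyS, hLS⟩) (by grind)
  refine h S hS hxL fun z hzS => or_iff_not_imp_left.2 fun hz => ?_
  have hzL : z ∉ L := fun h => hz (List.mem_cons_of_mem x h)
  rw [(hS.uncovered hLS hzS hzL).mem_compatible_iff]
  exact ⟨by grind, hS.uncovered hxL hzS hz⟩

theorem extensionsOk_of_sidonSearch {n : ℕ} {Γ : List AffineTransvection} {E : List ℕ}
    (hΓ : ∀ σ ∈ Γ, σ.isSymmetry t L A = true) (hL : L.Nodup)
    (hE : ∀ z ∈ E, z < 2 ^ t ∧ Uncovered L z) (hC : ∀ z ∈ C, z < 2 ^ t ∧ Uncovered L z)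
    (hCA : ∀ y ∈ C, y ∈ A) (hA : ∀ y ∈ A, y ∉ C → ExtensionsOk t ok (y :: L) A)
    (h : sidonSearch t ok n Γ L E C = true) : ExtensionsOk t ok L A := by
  fun_induction sidonSearch t ok n Γ L E C generalizing A with
  | case1 => exact extensionsOk_of_not_isEmpty_or hL hE (by simpa using hA) h
  | case2 => cases h
  | case3 n Γ L E x C ih_child ih_rest =>
    rw [Bool.and_eq_true] at h
    obtain ⟨⟨-, hx⟩, hC⟩ := List.forall_mem_cons.1 hC
    have compatible_uncovered {D} (hD : ∀ z ∈ D, z < 2 ^ t ∧ Uncovered L z) :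
        ∀ z ∈ compatible L x D, z < 2 ^ t ∧ Uncovered (x :: L) z := fun z hz =>
      have ⟨hzt, hzL⟩ := hD z (List.mem_filter.1 hz).1
      ⟨hzt, (hzL.mem_compatible_iff.1 hz).2⟩
    have hx_ok : ExtensionsOk t ok (x :: L) A :=
      extensionsOk_cons hCA hA (ih_child isSymmetry_of_mem_symmetries (hL.cons hx.notMem)
        (compatible_uncovered hE) (compatible_uncovered hC) (fun _ => id)
        (fun y hy hy' => absurd hy hy') h.1)
    have h_orbit : ∀ y ∈ (splitOrbit (4 ^ t) Γ x C).1, ExtensionsOk t ok (y :: L) A :=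
      splitOrbit_induction (fun σ hσ y => extensionsOk_apply (hΓ σ hσ)) hx_ok
    have h_split (y) := mem_splitOrbit (fuel := 4 ^ t) (Γ := Γ) (x := x) (y := y) (C := C)
    refine ih_rest hΓ hL ?_ ?_ ?_ ?_ h.2 <;> grind

/-- The points outside the Sidon code `frame t` that no sum of three of its points covers. -/
def frameCandidates (t : ℕ) : List ℕ :=
  (List.range (2 ^ t)).filter fun z =>
    !(frame t).any fun a => (pairSums (frame t)).testBit (a ^^^ z)

/-- Every maximal Sidon set is affinely equivalent to one with a code containing the frame, so the
search may start there, with the symmetries exchanging neighbouring points of the frame. -/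
def sidonSearchFromFrame (t : ℕ) (ok : ℕ → Bool) : Bool :=
  sidonSearch t ok (2 ^ t)
    (symmetries t (List.zipWith (swap t) (frame t) (frame t).tail) (frame t) (frameCandidates t))
    (frame t) [] (frameCandidates t)

theorem mem_frameCandidates {t z : ℕ} :
    z ∈ frameCandidates t ↔ z < 2 ^ t ∧ Uncovered (frame t) z := by
  simp only [frameCandidates, List.mem_filter, List.mem_range, Bool.not_eq_eq_eq_not, Bool.not_true,
    ← Bool.not_eq_true, List.any_eq_true, testBit_pairSums, xor_eq_zero_iff, Uncovered, ne_eq,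
    xor_xor_eq_iff]
  grind

theorem IsMaximalSidon.card_ok_of_sidonSearchFromFrame {t : ℕ} {ok : ℕ → Bool}
    (h : sidonSearchFromFrame t ok = true) {M : Finset (Fin t → ZMod 2)} (hM : IsMaximalSidon M) :
    ok M.card = true := by
  obtain ⟨S, hS, h_card, h_frame⟩ := hM.exists_isMaximalSidonCode
  have mem_or_mem (z) (hz : z ∈ S) : z ∈ frame t ∨ z ∈ frameCandidates t :=
    or_iff_not_imp_left.2 fun hz' =>
      mem_frameCandidates.2 ⟨hS.lt_two_pow z hz, hS.uncovered h_frame hz hz'⟩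
  rw [← h_card]
  exact extensionsOk_of_sidonSearch isSymmetry_of_mem_symmetries (nodup_frame t) (by simp)
    (fun z => mem_frameCandidates.1) (fun _ => id) (fun y hy hy' => absurd hy hy') h
    S hS h_frame mem_or_mem

end Search

set_option maxRecDepth 100000 in
theorem sidonSearchFromFrame_seven : sidonSearchFromFrame 7 (· == 12) = true := by
  decide +kernel

set_option maxRecDepth 100000 in
theorem sidonSearchFromFrame_eight :
    sidonSearchFromFrame 8 (fun n => n == 15 || n == 16 || n == 18) = true := by
  decide +kernel

theorem maximal_sidon_dim7_dim8 :
    (∀ M : Finset (Fin 7 → ZMod 2), IsMaximalSidon M → M.card = 12) ∧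
    (∀ M : Finset (Fin 8 → ZMod 2), IsMaximalSidon M →
      M.card = 15 ∨ M.card = 16 ∨ M.card = 18) := by
  refine ⟨fun M hM => ?_, fun M hM => ?_⟩
  · simpa using hM.card_ok_of_sidonSearchFromFrame sidonSearchFromFrame_seven
  · simpa [or_assoc] using hM.card_ok_of_sidonSearchFromFrame sidonSearchFromFrame_eight
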